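/- Let C(ν;x), U(ν;x), G²(ν;x) be Q×Q-matrix-valued functions (ν ∈ ℝ^{M+1}, x ∈ ℝ^M), twice differentiable in x, let g²_{αβ}(ν) be scalar functions and B² a constant diagonal matrix. Define u(x) = ∫ C U dν, u¹(x) = ∫ (∂_{x_1}C) U dν, u²(x) = ∫ (∂²_{x_1}C) U dν, assume all integrals converge absolutely and x-derivatives may be taken under the integral sign. Assume C satisfies entrywise ∂_{x_2}C_{αβ} + g²_{αβ}(ν) C_{αβ} − B²_α ∂_{x_1}C_{αβ} = 0, and U satisfies pointwise in ν: ∂_{x_2}U − (∂_{x_1}U)B² + U[B²,u] − G² = 0. Then u¹ satisfies ∂_{x_2}u¹ − (∂_{x_1}u¹)B² + u¹[B²,u] = [B²,u²] − ∫ (∂_{x_1}C^{12})(ν;x) U(ν;x) dν + ∫ (∂_{x_1}C)(ν;x) G²(ν;x) dν, where C^{12}_{αβ}(ν;x) = C_{αβ}(ν;x) g²_{αβ}(ν). -/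

import Mathlib

open MeasureTheory Finset

/-- Partial derivative in the `k`-th coordinate direction of a complex-valued
function on `ℝ^M`. -/
noncomputable def pd {M : ℕ} (k : Fin M) (f : (Fin M → ℝ) → ℂ) (x : Fin M → ℝ) : ℂ :=
  fderiv ℝ f x (Pi.single k 1)

/-!
Multiply the spectral equation for `U` from the left by `∂_i C` and sum over the inner index. By the
Leibniz rule the term `∂_i C ∂_j U` is `∂_j (∂_i C U)` minus `∂_j ∂_i C U`, and differentiating the
dressing equation for `C` along `i`, with the mixed derivatives exchanged, gives
`∂_j ∂_i C = A ∂_i² C - ∂_i C g`. The result is a pointwise identity in `ν` whose integral, compared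
with the integrated Leibniz rule for `∂_i (∂_i C U)`, is the auxiliary equation. The commutator
`[B, u]` enters only as a potential that does not depend on `ν`.
-/

section PartialDerivative

variable {M : ℕ} {f h : (Fin M → ℝ) → ℂ} {x : Fin M → ℝ}

theorem pd_congr (hfh : f =ᶠ[nhds x] h) (k : Fin M) : pd k f x = pd k h x := by
  simp only [pd, hfh.fderiv_eq]

theorem pd_sub (hf : DifferentiableAt ℝ f x) (hh : DifferentiableAt ℝ h x) (k : Fin M) :
    pd k (fun y => f y - h y) x = pd k f x - pd k h x := by
  simp only [pd, fderiv_fun_sub hf hh, sub_apply]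

theorem pd_const_mul (hf : DifferentiableAt ℝ f x) (a : ℂ) (k : Fin M) :
    pd k (fun y => a * f y) x = a * pd k f x := by
  simp only [pd, fderiv_const_mul hf, smul_apply, smul_eq_mul]

theorem pd_mul (hf : DifferentiableAt ℝ f x) (hh : DifferentiableAt ℝ h x) (k : Fin M) :
    pd k (fun y => f y * h y) x = pd k f x * h x + f x * pd k h x := by
  simp only [pd, fderiv_fun_mul hf hh, add_apply,
    smul_apply, smul_eq_mul]
  ring

theorem differentiableAt_fderiv_of_contDiffAt_two (hf : ContDiffAt ℝ 2 f x) :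
    DifferentiableAt ℝ (fderiv ℝ f) x :=
  (hf.fderiv_right (m := 1) (by norm_num)).differentiableAt one_ne_zero

theorem differentiableAt_pd (hf : ContDiffAt ℝ 2 f x) (k : Fin M) :
    DifferentiableAt ℝ (pd k f) x :=
  (differentiableAt_fderiv_of_contDiffAt_two hf).clm_apply (differentiableAt_const _)

theorem pd_pd_eq_fderiv_fderiv (hf : ContDiffAt ℝ 2 f x) (i j : Fin M) :
    pd i (pd j f) x = fderiv ℝ (fderiv ℝ f) x (Pi.single i 1) (Pi.single j 1) := by
  change fderiv ℝ (fun y => fderiv ℝ f y (Pi.single j 1)) x _ = _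
  rw [fderiv_clm_apply (differentiableAt_fderiv_of_contDiffAt_two hf) (differentiableAt_const _)]
  simp

theorem pd_comm (hf : ContDiffAt ℝ 2 f x) (i j : Fin M) : pd i (pd j f) x = pd j (pd i f) x := by
  rw [pd_pd_eq_fderiv_fderiv hf, pd_pd_eq_fderiv_fderiv hf]
  exact (hf.isSymmSndFDerivAt (by simp)).eq _ _

end PartialDerivative

section Dressing

variable {M : ℕ} {m n : Type*} [Fintype m] [Fintype n] {i j : Fin M} {x : Fin M → ℝ}

theorem pd_pd_eq_of_dressing {f : (Fin M → ℝ) → ℂ} {a g : ℂ} (hf : ContDiffAt ℝ 2 f x)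
    (hdress : ∀ᶠ y in nhds x, pd j f y + g * f y - a * pd i f y = 0) :
    pd j (pd i f) x = a * pd i (pd i f) x - g * pd i f x := by
  have hj : pd j f =ᶠ[nhds x] fun y => a * pd i f y - g * f y :=
    hdress.mono fun y hy => by linear_combination hy
  have hf' : DifferentiableAt ℝ f x := hf.differentiableAt two_ne_zero
  have hif : DifferentiableAt ℝ (pd i f) x := differentiableAt_pd hf i
  rw [pd_comm hf, pd_congr hj, pd_sub (hif.const_mul a) (hf'.const_mul g), pd_const_mul hif,
    pd_const_mul hf']

theorem sum_pd_mul {c U : m → (Fin M → ℝ) → ℂ} (hc : ∀ γ, DifferentiableAt ℝ (c γ) x)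
    (hU : ∀ γ, DifferentiableAt ℝ (U γ) x) (k : Fin M) :
    ∑ γ, pd k (fun y => c γ y * U γ y) x
      = ∑ γ, pd k (c γ) x * U γ x + ∑ γ, c γ x * pd k (U γ) x := by
  simp only [pd_mul (hc _) (hU _), sum_add_distrib]

theorem sum_mul_pd_of_spectral {U : m → n → (Fin M → ℝ) → ℂ} {G : m → ℂ} {V : n → ℂ} {β : n}
    {b : ℂ} (p : m → ℂ)
    (hspec : ∀ γ, pd j (U γ β) x - pd i (U γ β) x * b + ∑ δ, U γ δ x * V δ - G γ = 0) :
    ∑ γ, p γ * pd j (U γ β) x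
      = (∑ γ, p γ * pd i (U γ β) x) * b - ∑ δ, (∑ γ, p γ * U γ δ x) * V δ + ∑ γ, p γ * G γ := by
  have hassoc : ∑ γ, p γ * ∑ δ, U γ δ x * V δ = ∑ δ, (∑ γ, p γ * U γ δ x) * V δ :=
    Matrix.dotProduct_mulVec p (fun γ δ => U γ δ x) V
  rw [← hassoc, sum_mul, ← sum_sub_distrib, ← sum_add_distrib]
  exact sum_congr rfl fun γ _ => by linear_combination p γ * hspec γ

theorem sum_pd_pd_mul_of_dressing_of_spectral {c : m → (Fin M → ℝ) → ℂ}
    {U : m → n → (Fin M → ℝ) → ℂ} {g G : m → ℂ} {V : n → ℂ} {β : n} {a b : ℂ}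
    (hc : ∀ γ, ContDiffAt ℝ 2 (c γ) x) (hU : ∀ γ, DifferentiableAt ℝ (U γ β) x)
    (hdress : ∀ γ, ∀ᶠ y in nhds x, pd j (c γ) y + g γ * c γ y - a * pd i (c γ) y = 0)
    (hspec : ∀ γ, pd j (U γ β) x - pd i (U γ β) x * b + ∑ δ, U γ δ x * V δ - G γ = 0) :
    ∑ γ, pd j (fun y => pd i (c γ) y * U γ β y) x
      = a * ∑ γ, pd i (pd i (c γ)) x * U γ β x - ∑ γ, pd i (c γ) x * g γ * U γ β x
        + ((∑ γ, pd i (c γ) x * pd i (U γ β) x) * b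
          - ∑ δ, (∑ γ, pd i (c γ) x * U γ δ x) * V δ + ∑ γ, pd i (c γ) x * G γ) := by
  have hmixed : ∑ γ, pd j (pd i (c γ)) x * U γ β x
      = a * ∑ γ, pd i (pd i (c γ)) x * U γ β x - ∑ γ, pd i (c γ) x * g γ * U γ β x := by
    rw [mul_sum, ← sum_sub_distrib]
    refine sum_congr rfl fun γ _ => ?_
    rw [pd_pd_eq_of_dressing (hc γ) (hdress γ)]
    ring
  rw [sum_pd_mul (fun γ => differentiableAt_pd (hc γ) i) hU, hmixed,
    sum_mul_pd_of_spectral _ hspec]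

variable {Λ : Type*} [MeasurableSpace Λ] {μ : Measure Λ}

theorem integral_sum_pd_mul {c U : m → Λ → (Fin M → ℝ) → ℂ} {k : Fin M}
    (hc : ∀ γ ν, DifferentiableAt ℝ (c γ ν) x) (hU : ∀ γ ν, DifferentiableAt ℝ (U γ ν) x)
    (hcU : Integrable (fun ν => ∑ γ, pd k (c γ ν) x * U γ ν x) μ)
    (hcU' : Integrable (fun ν => ∑ γ, c γ ν x * pd k (U γ ν) x) μ) :
    ∫ ν, ∑ γ, pd k (fun y => c γ ν y * U γ ν y) x ∂μ
      = (∫ ν, ∑ γ, pd k (c γ ν) x * U γ ν x ∂μ)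
        + ∫ ν, ∑ γ, c γ ν x * pd k (U γ ν) x ∂μ := by
  rw [← integral_add hcU hcU']
  exact integral_congr_ae (.of_forall fun ν => sum_pd_mul (hc · ν) (hU · ν) k)

theorem integral_sum_pd_pd_mul_of_dressing_of_spectral {c : m → Λ → (Fin M → ℝ) → ℂ}
    {U : m → n → Λ → (Fin M → ℝ) → ℂ} {g G : m → Λ → ℂ} {V : n → ℂ} {β : n} {a b : ℂ}
    (hc : ∀ γ ν, ContDiffAt ℝ 2 (c γ ν) x) (hU : ∀ γ ν, DifferentiableAt ℝ (U γ β ν) x)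
    (hint : ∀ δ, Integrable (fun ν => ∑ γ, pd i (c γ ν) x * U γ δ ν x) μ)
    (hint₂ : Integrable (fun ν => ∑ γ, pd i (pd i (c γ ν)) x * U γ β ν x) μ)
    (hintU : Integrable (fun ν => ∑ γ, pd i (c γ ν) x * pd i (U γ β ν) x) μ)
    (hintg : Integrable (fun ν => ∑ γ, pd i (c γ ν) x * g γ ν * U γ β ν x) μ)
    (hintG : Integrable (fun ν => ∑ γ, pd i (c γ ν) x * G γ ν) μ)
    (hdress : ∀ γ ν, ∀ᶠ y in nhds x,
      pd j (c γ ν) y + g γ ν * c γ ν y - a * pd i (c γ ν) y = 0)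
    (hspec : ∀ γ ν,
      pd j (U γ β ν) x - pd i (U γ β ν) x * b + ∑ δ, U γ δ ν x * V δ - G γ ν = 0) :
    ∫ ν, ∑ γ, pd j (fun y => pd i (c γ ν) y * U γ β ν y) x ∂μ
      = a * (∫ ν, ∑ γ, pd i (pd i (c γ ν)) x * U γ β ν x ∂μ)
          - (∫ ν, ∑ γ, pd i (c γ ν) x * g γ ν * U γ β ν x ∂μ)
        + ((∫ ν, ∑ γ, pd i (c γ ν) x * pd i (U γ β ν) x ∂μ) * b
          - ∑ δ, (∫ ν, ∑ γ, pd i (c γ ν) x * U γ δ ν x ∂μ) * V δ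
          + ∫ ν, ∑ γ, pd i (c γ ν) x * G γ ν ∂μ) := by
  have hpot : Integrable (fun ν => ∑ δ, (∑ γ, pd i (c γ ν) x * U γ δ ν x) * V δ) μ :=
    integrable_finsetSum _ fun δ _ => (hint δ).mul_const _
  have hag := (hint₂.const_mul a).sub' hintg
  have hbV := (hintU.mul_const b).sub' hpot
  rw [integral_congr_ae (.of_forall fun ν => sum_pd_pd_mul_of_dressing_of_spectral
      (U := (U · · ν)) (hc · ν) (hU · ν) (hdress · ν) (hspec · ν)),
    integral_add hag (hbV.fun_add hintG), integral_add hbV hintG,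
    integral_sub (hint₂.const_mul a) hintg, integral_sub (hintU.mul_const b) hpot,
    integral_finsetSum _ fun δ _ => (hint δ).mul_const _]
  simp only [integral_const_mul, integral_mul_const]

theorem stmt17_general {l : Type*} {C : l → m → Λ → (Fin M → ℝ) → ℂ}
    {U G : m → n → Λ → (Fin M → ℝ) → ℂ} {g : l → m → Λ → ℂ} {A : l → ℂ} {B : n → ℂ}
    {V : n → n → (Fin M → ℝ) → ℂ} {u₁ u₂ : l → n → (Fin M → ℝ) → ℂ}
    (hCd : ∀ α γ ν, ContDiff ℝ 2 (C α γ ν)) (hUd : ∀ γ β ν, Differentiable ℝ (U γ β ν))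
    (hu₁ : ∀ α β x, u₁ α β x = ∫ ν, ∑ γ, pd i (C α γ ν) x * U γ β ν x ∂μ)
    (hu₂ : ∀ α β x, u₂ α β x = ∫ ν, ∑ γ, pd i (pd i (C α γ ν)) x * U γ β ν x ∂μ)
    (hint₁ : ∀ α β x, Integrable (fun ν => ∑ γ, pd i (C α γ ν) x * U γ β ν x) μ)
    (hint₂ : ∀ α β x, Integrable (fun ν => ∑ γ, pd i (pd i (C α γ ν)) x * U γ β ν x) μ)
    (hintU : ∀ α β x, Integrable (fun ν => ∑ γ, pd i (C α γ ν) x * pd i (U γ β ν) x) μ)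
    (hintg : ∀ α β x, Integrable (fun ν => ∑ γ, pd i (C α γ ν) x * g α γ ν * U γ β ν x) μ)
    (hintG : ∀ α β x, Integrable (fun ν => ∑ γ, pd i (C α γ ν) x * G γ β ν x) μ)
    (hswap : ∀ k α β x,
      pd k (u₁ α β) x = ∫ ν, ∑ γ, pd k (fun y => pd i (C α γ ν) y * U γ β ν y) x ∂μ)
    (hdress : ∀ α γ ν x,
      pd j (C α γ ν) x + g α γ ν * C α γ ν x - A α * pd i (C α γ ν) x = 0)
    (hspec : ∀ γ β ν x,
      pd j (U γ β ν) x - pd i (U γ β ν) x * B β + ∑ δ, U γ δ ν x * V δ β x - G γ β ν x = 0)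
    (α : l) (β : n) (x : Fin M → ℝ) :
    pd j (u₁ α β) x - pd i (u₁ α β) x * B β + ∑ δ, u₁ α δ x * V δ β x
      = (A α * u₂ α β x - u₂ α β x * B β)
        - (∫ ν, ∑ γ, pd i (C α γ ν) x * g α γ ν * U γ β ν x ∂μ)
        + ∫ ν, ∑ γ, pd i (C α γ ν) x * G γ β ν x ∂μ := by
  have hC : ∀ γ ν, ContDiffAt ℝ 2 (C α γ ν) x := fun γ ν => (hCd α γ ν).contDiffAt
  have hU : ∀ γ ν, DifferentiableAt ℝ (U γ β ν) x := fun γ ν => hUd γ β ν x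
  have hi := integral_sum_pd_mul (fun γ ν => differentiableAt_pd (hC γ ν) i) hU
    (hint₂ α β x) (hintU α β x)
  have hj := integral_sum_pd_pd_mul_of_dressing_of_spectral hC hU (hint₁ α · x) (hint₂ α β x)
    (hintU α β x) (hintg α β x) (hintG α β x) (fun γ ν => .of_forall (hdress α γ ν))
    (hspec · β · x)
  simp only [← hswap, ← hu₁, ← hu₂] at hi hj
  linear_combination hj - B β * hi

end Dressing

/-- applying `∂_{x_1}C` to the first spectral equation yields the
auxiliary equation for `u¹` in the Davey–Stewartson construction.  Coordinates
are indexed by `Fin (M+2)` (index `0` is `x_1`, index `1` is `x_2`); spectral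
parameters `ν ∈ ℝ^{M+1}` by `Fin (M+3)`.  Entrywise: `g α β ν = g²_{αβ}(ν)`,
`B α = B²_α` (diagonal `B²`). -/
theorem stmt17 {M Q : ℕ}
    (C U G : Fin Q → Fin Q → (Fin (M + 3) → ℝ) → (Fin (M + 2) → ℝ) → ℂ)
    (g : Fin Q → Fin Q → (Fin (M + 3) → ℝ) → ℂ) (B : Fin Q → ℂ)
    -- twice differentiable in x (entrywise)
    (hCd : ∀ α γ ν, ContDiff ℝ 2 (C α γ ν))
    (hUd : ∀ γ β ν, ContDiff ℝ 2 (U γ β ν))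
    (hGd : ∀ γ β ν, ContDiff ℝ 2 (G γ β ν))
    (u u1 u2 : Fin Q → Fin Q → (Fin (M + 2) → ℝ) → ℂ)
    (hu : ∀ α β x, u α β x = ∫ ν, ∑ γ, C α γ ν x * U γ β ν x)
    (hu1 : ∀ α β x, u1 α β x = ∫ ν, ∑ γ, pd 0 (C α γ ν) x * U γ β ν x)
    (hu2 : ∀ α β x, u2 α β x = ∫ ν, ∑ γ, pd 0 (pd 0 (C α γ ν)) x * U γ β ν x)
    -- absolute convergence of all integrals involved
    (hiu : ∀ α β x, Integrable fun ν => ∑ γ, C α γ ν x * U γ β ν x)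
    (hiu1 : ∀ α β x, Integrable fun ν => ∑ γ, pd 0 (C α γ ν) x * U γ β ν x)
    (hiu2 : ∀ α β x, Integrable fun ν => ∑ γ, pd 0 (pd 0 (C α γ ν)) x * U γ β ν x)
    (hiG : ∀ α β x, Integrable fun ν => ∑ γ, pd 0 (C α γ ν) x * G γ β ν x)
    (hig : ∀ α β x, Integrable fun ν => ∑ γ, pd 0 (C α γ ν) x * g α γ ν * U γ β ν x)
    (hiCU : ∀ (k : Fin (M + 2)) α β x,
      Integrable fun ν => ∑ γ, pd k (pd 0 (C α γ ν)) x * U γ β ν x)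
    (hiCU' : ∀ (k : Fin (M + 2)) α β x,
      Integrable fun ν => ∑ γ, pd 0 (C α γ ν) x * pd k (U γ β ν) x)
    -- x-derivatives of u, u¹, u² may be taken under the integral sign
    (hswapu : ∀ (k : Fin (M + 2)) α β x,
      pd k (u α β) x = ∫ ν, ∑ γ, pd k (fun y => C α γ ν y * U γ β ν y) x)
    (hswapu1 : ∀ (k : Fin (M + 2)) α β x,
      pd k (u1 α β) x = ∫ ν, ∑ γ, pd k (fun y => pd 0 (C α γ ν) y * U γ β ν y) x)
    (hswapu2 : ∀ (k : Fin (M + 2)) α β x,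
      pd k (u2 α β) x = ∫ ν, ∑ γ, pd k (fun y => pd 0 (pd 0 (C α γ ν)) y * U γ β ν y) x)
    -- the dressing equation for C, entrywise
    (hC : ∀ α γ ν x, pd 1 (C α γ ν) x + g α γ ν * C α γ ν x
        - B α * pd 0 (C α γ ν) x = 0)
    -- the spectral equation for U, pointwise in ν
    (hU : ∀ γ β ν x, pd 1 (U γ β ν) x - pd 0 (U γ β ν) x * B β
        + (∑ δ, U γ δ ν x * (B δ * u δ β x - u δ β x * B β)) - G γ β ν x = 0) :
    -- conclusion: the auxiliary equation for u¹
    ∀ α β x,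
      pd 1 (u1 α β) x - pd 0 (u1 α β) x * B β
        + (∑ δ, u1 α δ x * (B δ * u δ β x - u δ β x * B β))
      = (B α * u2 α β x - u2 α β x * B β)
        - (∫ ν, ∑ γ, pd 0 (C α γ ν) x * g α γ ν * U γ β ν x)
        + ∫ ν, ∑ γ, pd 0 (C α γ ν) x * G γ β ν x := by
  exact stmt17_general hCd (fun γ β ν => (hUd γ β ν).differentiable two_ne_zero) hu1 hu2 hiu1 hiu2
    (hiCU' 0) hig hiG hswapu1 hC hU
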